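/- arXiv:1106.5573 — 4 statements merged into one kernel-verified Lean document; each statement's English description precedes it below -/
import Mathlib

section
/- Let b ≥ 3, let P ⊆ ℝ^b be a two-dimensional linear subspace on which q is positive definite, let P^⊥ = {v ∈ ℝ^b : ⟨v, p⟩ = 0 for all p ∈ P} be its q-orthogonal complement, let Λ ⊆ ℝ^b be a countable additive subgroup, and let H be a proper linear subspace of the real vector space Hom_ℝ(P, P^⊥). Then there exists α ∈ P^⊥ such that: q(α) > 0; (P + ℝα)^⊥ ∩ Λ = {0}; and the subspace {f ∈ Hom_ℝ(P, P^⊥) : range f ⊆ ℝα} is not contained in H. (In particular, through any point of the period domain and in any tangent direction transverse to a given hyperplane there passes a generic twistor line.) -/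
noncomputable section

open scoped BigOperators

def eps {b : ℕ} (i : Fin b) : ℝ := if (i : ℕ) < 3 then 1 else -1

def bR {b : ℕ} (v w : Fin b → ℝ) : ℝ := ∑ i, eps i * v i * w i

def qR {b : ℕ} (v : Fin b → ℝ) : ℝ := bR v v

def bC {b : ℕ} (z w : Fin b → ℂ) : ℂ := ∑ i, (eps i : ℂ) * z i * w i

def qC {b : ℕ} (z : Fin b → ℂ) : ℂ := bC z z

def conjVec {b : ℕ} (z : Fin b → ℂ) : Fin b → ℂ := fun i => (starRingEnd ℂ) (z i)

def rePart {b : ℕ} (z : Fin b → ℂ) : Fin b → ℝ := fun i => (z i).re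
def imPart {b : ℕ} (z : Fin b → ℂ) : Fin b → ℝ := fun i => (z i).im

def cplx {b : ℕ} (v : Fin b → ℝ) : Fin b → ℂ := fun i => (v i : ℂ)

def isPeriodVec {b : ℕ} (z : Fin b → ℂ) : Prop :=
  qC z = 0 ∧ 0 < (bC z (conjVec z)).re

instance projectivizationTopology (K V : Type*) [DivisionRing K] [AddCommGroup V] [Module K V]
    [TopologicalSpace V] : TopologicalSpace (Projectivization K V) :=
  inferInstanceAs (TopologicalSpace (Quotient (projectivizationSetoid K V)))

def periodDomain (b : ℕ) : Set (Projectivization ℂ (Fin b → ℂ)) :=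
  {x | ∃ (z : Fin b → ℂ) (hz : z ≠ 0), Projectivization.mk ℂ z hz = x ∧ isPeriodVec z}

def Pspan {b : ℕ} (z : Fin b → ℂ) : Submodule ℝ (Fin b → ℝ) :=
  Submodule.span ℝ {rePart z, imPart z}

def PosDefOn {b : ℕ} (W : Submodule ℝ (Fin b → ℝ)) : Prop :=
  ∀ v ∈ W, v ≠ 0 → 0 < qR v

def twistorLine {b : ℕ} (W : Submodule ℝ (Fin b → ℝ)) :
    Set (Projectivization ℂ (Fin b → ℂ)) :=
  {x | ∃ (z : Fin b → ℂ) (hz : z ≠ 0), Projectivization.mk ℂ z hz = x ∧ isPeriodVec z ∧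
    rePart z ∈ W ∧ imPart z ∈ W}

/-- `W^⊥ ∩ Λ = {0}`: the twistor line / three-space `W` is generic w.r.t. `Λ`. -/
def IsGenericW {b : ℕ} (Λ : AddSubgroup (Fin b → ℝ)) (W : Submodule ℝ (Fin b → ℝ)) : Prop :=
  ∀ α ∈ Λ, (∀ w ∈ W, bR α w = 0) → α = 0

def bRlin {b : ℕ} (p : Fin b → ℝ) : (Fin b → ℝ) →ₗ[ℝ] ℝ where
  toFun v := bR v p
  map_add' x y := by
    unfold bR
    rw [← Finset.sum_add_distrib]
    exact Finset.sum_congr rfl fun i _ => by simp [Pi.add_apply]; ring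
  map_smul' c x := by
    show bR (c • x) p = (RingHom.id ℝ) c • bR x p
    unfold bR
    rw [RingHom.id_apply, smul_eq_mul, Finset.mul_sum]
    exact Finset.sum_congr rfl fun i _ => by simp [Pi.smul_apply]; ring

def perpSubmodule {b : ℕ} (P : Submodule ℝ (Fin b → ℝ)) : Submodule ℝ (Fin b → ℝ) :=
  ⨅ p ∈ P, LinearMap.ker (bRlin p)

/-!
Rank-one maps span `Hom(P, P^⊥)`, so some `φ ⊗ w` lies outside `H`; hence `φ ⊗ α ∉ H` as soon as
`α` avoids the proper subspace `{α | φ ⊗ α ∈ H}` of `P^⊥`. A nonzero `l ∈ Λ` orthogonal to `P`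
cannot be orthogonal to all of `P^⊥`, since `P + P^⊥ = ℝ^b` and the form is nondegenerate, so `α`
has to avoid one further proper subspace `l^⊥ ∩ P^⊥` for each of countably many `l`. By Baire, the
nonempty open cone `{q > 0}` of `P^⊥` contains such an `α`.
-/

section LinearAlgebra

lemma exists_smulRight_notMem {R M N : Type*} [CommRing R] [AddCommGroup M] [Module R M]
    [Module.Free R M] [Module.Finite R M] [AddCommGroup N] [Module R N]
    {H : Submodule R (M →ₗ[R] N)} (hH : H ≠ ⊤) :
    ∃ (φ : M →ₗ[R] R) (w : N), φ.smulRight w ∉ H := by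
  by_contra! hmem
  refine hH (eq_top_iff.2 fun f _ => ?_)
  let e := Module.Free.chooseBasis R M
  have hf : f = ∑ i, (e.coord i).smulRight (f (e i)) :=
    e.ext fun j => by simp [LinearMap.sum_apply, Finsupp.single_apply]
  exact hf ▸ H.sum_mem fun i _ => hmem _ _

lemma exists_ne_zero_apply_mem_orthogonal {K V E : Type*} [Field K] [AddCommGroup V] [Module K V]
    [AddCommGroup E] [Module K E] (B : LinearMap.BilinForm K V) (P : Submodule K V)
    [FiniteDimensional K P] (T : E →ₗ[K] V) (h : Module.finrank K P < Module.finrank K E) :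
    ∃ e ≠ 0, T e ∈ B.orthogonal P := by
  have : FiniteDimensional K E := FiniteDimensional.of_finrank_pos (Nat.zero_lt_of_lt h)
  let S : E →ₗ[K] Module.Dual K P := B.flip.compl₁₂ T P.subtype
  have hS : LinearMap.ker S ≠ ⊥ :=
    LinearMap.ker_ne_bot_of_finrank_lt (Subspace.dual_finrank_eq.trans_lt h)
  obtain ⟨e, he, he0⟩ := (Submodule.ne_bot_iff _).1 hS
  exact ⟨e, he0, fun p hp => LinearMap.congr_fun (LinearMap.mem_ker.1 he) ⟨p, hp⟩⟩

end LinearAlgebra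

section Baire

lemma dense_compl_of_ne_top {𝕜 E : Type*} [NontriviallyNormedField 𝕜] [NormedAddCommGroup E]
    [NormedSpace 𝕜 E] {N : Submodule 𝕜 E} (hN : N ≠ ⊤) : Dense (N : Set E)ᶜ := by
  rw [← interior_eq_empty_iff_dense_compl, ← Set.not_nonempty_iff_eq_empty]
  exact fun h => hN (N.eq_top_of_nonempty_interior' h)

lemma dense_biInter_compl_of_countable {𝕜 E : Type*} [NontriviallyNormedField 𝕜]
    [CompleteSpace 𝕜] [NormedAddCommGroup E] [NormedSpace 𝕜 E] [FiniteDimensional 𝕜 E]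
    {𝒩 : Set (Submodule 𝕜 E)} (h𝒩 : 𝒩.Countable) (htop : ⊤ ∉ 𝒩) :
    Dense (⋂ N ∈ 𝒩, (N : Set E)ᶜ) :=
  have : CompleteSpace E := FiniteDimensional.complete 𝕜 E
  dense_biInter_of_isOpen (fun N _ => N.closed_of_finiteDimensional.isOpen_compl) h𝒩
    fun _ hN => dense_compl_of_ne_top (ne_of_mem_of_not_mem hN htop)

lemma exists_pos_forall_notMem_of_countable {E : Type*} [AddCommGroup E] [Module ℝ E]
    [FiniteDimensional ℝ E] (B : LinearMap.BilinForm ℝ E) (hB : ∃ v, 0 < B v v)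
    {𝒩 : Set (Submodule ℝ E)} (h𝒩 : 𝒩.Countable) (htop : ⊤ ∉ 𝒩) :
    ∃ v, 0 < B v v ∧ ∀ N ∈ 𝒩, v ∉ N := by
  let e := (Module.finBasis ℝ E).equivFun
  let : NormedAddCommGroup E := NormedAddCommGroup.induced E _ e e.injective
  let : NormedSpace ℝ E := NormedSpace.induced ℝ E _ e
  have hcont : Continuous fun v => B v v :=
    B.toContinuousBilinearMap.continuous.clm_apply continuous_id
  obtain ⟨v, hv, hv𝒩⟩ := (dense_biInter_compl_of_countable h𝒩 htop).inter_open_nonempty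
    {v | 0 < B v v} (isOpen_lt continuous_const hcont) hB
  exact ⟨v, hv, Set.mem_iInter₂.1 hv𝒩⟩

end Baire

theorem stmt11_general {V : Type*} [AddCommGroup V] [Module ℝ V] [FiniteDimensional ℝ V]
    {B : LinearMap.BilinForm ℝ V} (hB : B.SeparatingLeft) {P Q : Submodule ℝ V}
    (hPQ : Codisjoint P Q) (hpos : ∃ v ∈ Q, 0 < B v v) {Λ : Set V} (hΛ : Λ.Countable)
    {H : Submodule ℝ (P →ₗ[ℝ] Q)} (hH : H ≠ ⊤) :
    ∃ α ∈ Q, 0 < B α α ∧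
      (∀ l ∈ Λ, (∀ w ∈ P ⊔ Submodule.span ℝ {α}, B l w = 0) → l = 0) ∧
      ∃ f : P →ₗ[ℝ] Q, (∀ p, (f p : V) ∈ Submodule.span ℝ {α}) ∧ f ∉ H := by
  obtain ⟨φ, w, hw⟩ := exists_smulRight_notMem hH
  let K : Submodule ℝ Q := H.comap (LinearMap.smulRightₗ φ)
  let N (l : V) : Submodule ℝ Q := LinearMap.ker ((B l).domRestrict Q)
  let S : Set V := {l ∈ Λ | l ≠ 0 ∧ P ≤ LinearMap.ker (B l)}
  have hK : ⊤ ≠ K := fun h => hw (h.le Submodule.mem_top : w ∈ K)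
  have hN : ⊤ ∉ N '' S := by
    rintro ⟨l, ⟨-, hl0, hlP⟩, hl⟩
    have hlQ : Q ≤ LinearMap.ker (B l) := fun v hv => hl.ge (Submodule.mem_top (x := ⟨v, hv⟩))
    exact hl0 (hB l fun v => hPQ hlP hlQ Submodule.mem_top)
  have hS : S.Countable := hΛ.mono (Set.sep_subset _ _)
  have htop : ⊤ ∉ insert K (N '' S) := by
    simpa only [Set.mem_insert_iff, not_or] using ⟨hK, hN⟩
  obtain ⟨v, hvQ, hv⟩ := hpos
  obtain ⟨α, hα, hα𝒩⟩ := exists_pos_forall_notMem_of_countable (B.restrict Q) ⟨⟨v, hvQ⟩, hv⟩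
    ((hS.image N).insert K) htop
  refine ⟨α, α.2, hα, fun l hl hperp => ?_, φ.smulRight α,
    fun p => Submodule.mem_span_singleton.2 ⟨φ p, rfl⟩, hα𝒩 K (Set.mem_insert _ _)⟩
  by_contra hl0
  have hlS : l ∈ S := ⟨hl, hl0, fun p hp => hperp p (Submodule.mem_sup_left hp)⟩
  exact hα𝒩 (N l) (Set.mem_insert_of_mem _ (Set.mem_image_of_mem N hlS))
    (hperp α (Submodule.mem_sup_right (Submodule.mem_span_singleton_self _)))

section StandardForm

variable {b : ℕ}

lemma bR_comm (v w : Fin b → ℝ) : bR v w = bR w v :=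
  Finset.sum_congr rfl fun i _ => by ring

/-- The form `bR` of signature `(3, b - 3)` as a bundled bilinear form, which gives access to
Mathlib's theory of orthogonal complements. -/
def bRForm (b : ℕ) : LinearMap.BilinForm ℝ (Fin b → ℝ) :=
  LinearMap.mk₂ ℝ bR (fun v v' w => (bRlin w).map_add v v') (fun c v w => (bRlin w).map_smul c v)
    (fun v w w' => by simpa only [bR_comm v] using! (bRlin v).map_add w w')
    (fun c v w => by simpa only [bR_comm v] using! (bRlin v).map_smul c w)

lemma isRefl_bRForm : (bRForm b).IsRefl := fun v w h => (bR_comm w v).trans h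

lemma separatingLeft_bRForm : (bRForm b).SeparatingLeft := by
  intro v hv
  funext i
  have heps : (eps i : ℝ) ≠ 0 := by unfold eps; split_ifs <;> norm_num
  have hvi : bR v (Pi.single i 1) = eps i * v i := by simp [bR, Pi.single_apply]
  exact (mul_eq_zero.1 (hvi.symm.trans (hv _))).resolve_left heps

lemma perpSubmodule_eq_orthogonal (P : Submodule ℝ (Fin b → ℝ)) :
    perpSubmodule P = (bRForm b).orthogonal P := by
  ext v
  simp only [perpSubmodule, Submodule.mem_iInf, LinearMap.mem_ker]
  exact forall₂_congr fun p _ => (bR_comm v p).congr_left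

lemma PosDefOn.codisjoint_perpSubmodule {P : Submodule ℝ (Fin b → ℝ)} (hP : PosDefOn P) :
    Codisjoint P (perpSubmodule P) := by
  rw [perpSubmodule_eq_orthogonal]
  refine ((LinearMap.BilinForm.isCompl_orthogonal_iff_disjoint isRefl_bRForm).2 ?_).codisjoint
  refine Submodule.disjoint_def.2 fun v hv hv' => ?_
  by_contra hv0
  exact (hP v hv hv0).ne' (hv' v hv)

lemma qR_extend_castLE (hb : 3 ≤ b) (v : Fin 3 → ℝ) :
    qR (Function.extend (Fin.castLE hb) v 0) = ∑ j, v j * v j := by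
  have hinj : Function.Injective (Fin.castLE hb) := Fin.castLE_injective hb
  refine (Fintype.sum_of_injective _ hinj _ _ (fun i hi => ?_) fun j => ?_).symm
  · simp [Function.extend_apply' v (0 : Fin b → ℝ) i hi]
  · simp [hinj.extend_apply, eps]

lemma exists_mem_perpSubmodule_qR_pos (hb : 3 ≤ b) {P : Submodule ℝ (Fin b → ℝ)}
    (hP : Module.finrank ℝ P < 3) : ∃ v ∈ perpSubmodule P, 0 < qR v := by
  obtain ⟨v, hv0, hv⟩ := exists_ne_zero_apply_mem_orthogonal (bRForm b) P
    (Function.ExtendByZero.linearMap ℝ (Fin.castLE hb)) (by simpa using hP)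
  obtain ⟨j, hj⟩ := Function.ne_iff.1 hv0
  refine ⟨_, (perpSubmodule_eq_orthogonal P).ge hv, ?_⟩
  calc 0 < ∑ j, v j * v j :=
        Finset.sum_pos' (fun i _ => mul_self_nonneg _) ⟨j, Finset.mem_univ j, mul_self_pos.2 hj⟩
    _ = _ := (qR_extend_castLE hb v).symm

end StandardForm

/-- through any point of the period domain and in any tangent direction
transverse to a given hyperplane `H ⊆ Hom_ℝ(P, P^⊥)` there passes a generic twistor
line: there is `α ∈ P^⊥` with `q(α) > 0`, `(P + ℝα)^⊥ ∩ Λ = {0}`, and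
`{f : range f ⊆ ℝα} ⊄ H`. -/
theorem stmt11 (b : ℕ) (hb : 3 ≤ b) (P : Submodule ℝ (Fin b → ℝ))
    (hdim : Module.finrank ℝ ↥P = 2) (hpos : PosDefOn P)
    (Λ : AddSubgroup (Fin b → ℝ)) (hΛ : (Λ : Set (Fin b → ℝ)).Countable)
    (H : Submodule ℝ (↥P →ₗ[ℝ] ↥(perpSubmodule P))) (hH : H ≠ ⊤) :
    ∃ α : Fin b → ℝ, α ∈ perpSubmodule P ∧ 0 < qR α ∧
      IsGenericW Λ (P ⊔ Submodule.span ℝ {α}) ∧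
      ∃ f : ↥P →ₗ[ℝ] ↥(perpSubmodule P),
        (∀ p : ↥P, (f p : Fin b → ℝ) ∈ Submodule.span ℝ {α}) ∧ f ∉ H :=
  stmt11_general separatingLeft_bRForm hpos.codisjoint_perpSubmodule
    (exists_mem_perpSubmodule_qR_pos hb (by lia)) hΛ hH
end
end

section
/- Let n ≥ 1, let A be a Hausdorff topological space, and let π : A → ℝⁿ be a local homeomorphism. Assume that for every closed ball B̄ ⊆ ℝⁿ (the closed metric ball of any center and any nonnegative radius) and every connected component C of π⁻¹(B̄), one has π(C) = B̄. Then π is a covering map. -/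
noncomputable section

open scoped BigOperators

/-!
A *sheet* over `V` is an open set mapped bijectively onto `V`. The crux is that a sheet `D` over a
ball extends to a sheet over a larger concentric ball. Since the intersection of the ball with any
small ball is connected, near each `x ∈ closure D` the set `D` is the whole preimage of the ball.
Hence `closure D` is relatively open in the preimage of the closed ball, so it contains a component
of it and maps onto the closed ball; it also follows that this map is a homeomorphism, so
`closure D` is compact and `f` remains injective on a neighbourhood of it. The supremum of the radii
of balls centred at `f a` having a sheet through `a` is therefore infinite, and sheets over a
common ball are equal or disjoint.
-/

section Sheets

open Set Filter Topology Metric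

section Topology

variable {A E : Type*} [TopologicalSpace A] {K S T : Set A}

theorem closure_mem_nhdsWithin_closure {x : A} (h : K ∈ 𝓝[S] x) : closure K ∈ 𝓝[closure S] x := by
  obtain ⟨U, hU, hxU, hUK⟩ := mem_nhdsWithin.1 h
  exact mem_nhdsWithin.2 ⟨U, hU, hxU, hU.inter_closure.trans (closure_mono hUK)⟩

theorem subset_of_isPreconnected_of_forall_mem_nhdsWithin (hT : IsPreconnected T)
    (hK : IsClosed K) (h : ∀ x ∈ T ∩ K, K ∈ 𝓝[T] x) (hTK : (T ∩ K).Nonempty) : T ⊆ K := by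
  obtain ⟨a, haT, haK⟩ := hTK
  intro z hz
  refine (hT.induction₂ (fun x y => x ∈ K ↔ y ∈ K) (fun x hx => ?_)
    (fun _ _ _ _ _ _ => Iff.trans) (fun _ _ _ _ => Iff.symm) haT hz).1 haK
  by_cases hxK : x ∈ K
  · filter_upwards [h x ⟨hx, hxK⟩] with y hy
    exact iff_of_true hxK hy
  · filter_upwards [mem_nhdsWithin_of_mem_nhds (hK.isOpen_compl.mem_nhds hxK)] with y hy
    exact iff_of_false hxK hy

theorem isCompact_of_isCompact_image [TopologicalSpace E] {f : A → E} (hinj : InjOn f K)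
    (h : ∀ x ∈ K, 𝓝[f '' K] (f x) ≤ map f (𝓝[K] x)) (hK : IsCompact (f '' K)) :
    IsCompact K := by
  rw [isCompact_iff_ultrafilter_le_nhds] at hK ⊢
  intro F hF
  have hmapF : map f F ≤ 𝓟 (f '' K) := (map_mono hF).trans_eq map_principal
  obtain ⟨_, ⟨x, hx, rfl⟩, hlim⟩ := hK (F.map f) hmapF
  have hmap : map f F ≤ map f (𝓝[K] x) := (le_inf hlim hmapF).trans (h x hx)
  have hle : F ≤ 𝓝[K] x :=
    (map_le_map_iff_of_injOn (le_principal_iff.1 hF) self_mem_nhdsWithin hinj).1 hmap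
  exact ⟨x, hx, hle.trans nhdsWithin_le_nhds⟩

theorem map_nhdsWithin_preimage_of_isLocalHomeomorph [TopologicalSpace E] {f : A → E}
    (hf : IsLocalHomeomorph f) (x : A) (V : Set E) :
    map f (𝓝[f ⁻¹' V] x) = 𝓝[V] (f x) := by
  rw [nhdsWithin, map_inf_principal_preimage, hf.map_nhds_eq, nhdsWithin]

end Topology

/-- A sheet of `f` over `V`: an open set that `f` maps bijectively onto `V`. For a continuous open
map this is the image of a continuous section over `V`, without choosing the section. -/
structure IsSheet {A E : Type*} [TopologicalSpace A] (f : A → E) (D : Set A) (V : Set E) :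
    Prop where
  isOpen : IsOpen D
  bijOn : BijOn f D V

section TopologicalBase

variable {A E : Type*} [TopologicalSpace A] {f : A → E} {D D' T : Set A} {V W : Set E}

theorem isSheet_iUnion_of_directed {ι : Type*} {D : ι → Set A} {V : ι → Set E}
    (hdir : Directed (· ⊆ ·) D) (hD : ∀ i, IsSheet f (D i) (V i)) :
    IsSheet f (⋃ i, D i) (⋃ i, V i) :=
  ⟨isOpen_iUnion fun i => (hD i).isOpen, bijOn_iUnion_of_directed hdir fun i => (hD i).bijOn⟩

variable [TopologicalSpace E]

theorem IsSheet.isOpen_base (hD : IsSheet f D V) (hf : IsOpenMap f) : IsOpen V :=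
  hD.bijOn.image_eq ▸ hf D hD.isOpen

theorem IsSheet.inter_preimage (hD : IsSheet f D V) (hf : Continuous f) (hW : IsOpen W)
    (hWV : W ⊆ V) : IsSheet f (D ∩ f ⁻¹' W) W :=
  ⟨hD.isOpen.inter (hW.preimage hf), hD.bijOn.subset_right hWV⟩

theorem exists_isSheet_image (hf : IsLocalHomeomorph f) (x : A) :
    ∃ U, x ∈ U ∧ IsSheet f U (f '' U) := by
  obtain ⟨e, hx, rfl⟩ := hf x
  exact ⟨e.source, hx, e.open_source, e.injOn.bijOn_image⟩

theorem exists_isSheet_image_superset [T2Space E] (hf : IsLocalHomeomorph f) {K : Set A}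
    (hinj : InjOn f K) (hK : IsCompact K) : ∃ D, K ⊆ D ∧ IsSheet f D (f '' D) := by
  have hlocal : ∀ x ∈ K, ∃ U ∈ 𝓝 x, InjOn f U := fun x _ => by
    obtain ⟨U, hxU, hU⟩ := exists_isSheet_image hf x
    exact ⟨U, hU.isOpen.mem_nhds hxU, hU.bijOn.injOn⟩
  obtain ⟨N, hN, hNinj⟩ := hinj.exists_mem_nhdsSet hK (fun _ _ => hf.continuous.continuousAt) hlocal
  obtain ⟨D, hD, hKD, hDN⟩ := mem_nhdsSet_iff_exists.1 hN
  exact ⟨D, hKD, hD, (hNinj.mono hDN).bijOn_image⟩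

theorem IsSheet.isOpen_preimage_inter_iff (hD : IsSheet f D V) (hf : Continuous f)
    (hf' : IsOpenMap f) (hW : W ⊆ V) : IsOpen (f ⁻¹' W ∩ D) ↔ IsOpen W := by
  refine ⟨fun h => ?_, fun h => (h.preimage hf).inter hD.isOpen⟩
  have himage : f '' (f ⁻¹' W ∩ D) = W := by
    rw [inter_comm, (hD.bijOn.subset_right hW).image_eq]
  exact himage ▸ hf' _ h

theorem IsSheet.isPreconnected (hD : IsSheet f D V) (hf : Continuous f) (hf' : IsOpenMap f)
    (hV : IsPreconnected V) : IsPreconnected D := by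
  have hemb : IsOpenEmbedding (D.domRestrict f) :=
    .of_continuous_injective_isOpenMap (hf.comp continuous_subtype_val) hD.bijOn.injOn.injective
      (hf'.comp hD.isOpen.isOpenMap_subtype_val)
  rw [← Subtype.range_coe (s := D), ← image_univ]
  refine IsPreconnected.image ?_ _ continuous_subtype_val.continuousOn
  rwa [← hemb.isInducing.isPreconnected_image, image_univ, range_domRestrict, hD.bijOn.image_eq]

theorem IsSheet.mem_of_mem_closure [T2Space A] (hD : IsSheet f D V) (hf : Continuous f)
    (hf' : IsOpenMap f) {x : A} (hx : x ∈ closure D) (hxV : f x ∈ V) : x ∈ D := by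
  obtain ⟨d, hd, hdx⟩ := hD.bijOn.surjOn hxV
  have hmap : map f (𝓝[D] x) ≤ map f (𝓝 d) :=
    calc map f (𝓝[D] x) ≤ 𝓝 (f x) := (map_mono nhdsWithin_le_nhds).trans hf.continuousAt
      _ = 𝓝 (f d) := by rw [hdx]
      _ ≤ map f (𝓝 d) := hf'.nhds_le d
  have hle : 𝓝[D] x ≤ 𝓝 d :=
    (map_le_map_iff_of_injOn self_mem_nhdsWithin (hD.isOpen.mem_nhds hd) hD.bijOn.injOn).1 hmap
  have : (𝓝[D] x).NeBot := mem_closure_iff_nhdsWithin_neBot.1 hx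
  exact eq_of_nhds_neBot (this.mono (le_inf nhdsWithin_le_nhds hle)) ▸ hd

theorem IsSheet.subset_of_isPreconnected [T2Space A] (hD : IsSheet f D V) (hf : Continuous f)
    (hf' : IsOpenMap f) (hT : IsPreconnected T) (hTV : MapsTo f T V) (hTD : (T ∩ D).Nonempty) :
    T ⊆ D :=
  hT.subset_of_closure_inter_subset hD.isOpen hTD fun _ hx =>
    hD.mem_of_mem_closure hf hf' hx.1 (hTV hx.2)

theorem IsSheet.subset [T2Space A] (hD : IsSheet f D V) (hD' : IsSheet f D' W)
    (hf : Continuous f) (hf' : IsOpenMap f) (hV : IsPreconnected V) (hVW : V ⊆ W)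
    (hmeet : (D ∩ D').Nonempty) : D ⊆ D' :=
  hD'.subset_of_isPreconnected hf hf' (hD.isPreconnected hf hf' hV)
    (hD.bijOn.mapsTo.mono_right hVW) hmeet

theorem isEvenlyCovered_of_forall_exists_isSheet [T2Space A] (hf : IsLocalHomeomorph f)
    (hV : IsOpen V) (hV' : IsPreconnected V) (h : ∀ a ∈ f ⁻¹' V, ∃ D, a ∈ D ∧ IsSheet f D V)
    {x : E} (hx : x ∈ V) : IsEvenlyCovered f x (f ⁻¹' {x}) := by
  have hcont := hf.continuous
  have hopen := hf.isOpenMap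
  have hfibre : ∀ e : f ⁻¹' {x}, ∃ D, e.1 ∈ D ∧ IsSheet f D V := by
    rintro ⟨e, rfl⟩
    exact h e hx
  choose U he hU using hfibre
  have hdisj : Pairwise (Function.onFun Disjoint U) := by
    intro e e' hne
    by_contra hmeet
    have hsub : U e ⊆ U e' := (hU e).subset (hU e') hcont hopen hV' subset_rfl
      (not_disjoint_iff_nonempty_inter.1 hmeet)
    exact hne (Subtype.ext ((hU e').bijOn.injOn (hsub (he e)) (he e') (e.2.trans e'.2.symm)))
  have hcover : f ⁻¹' V ⊆ ⋃ e, U e := by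
    intro z hz
    obtain ⟨D, hzD, hD⟩ := h z hz
    obtain ⟨b, hb, hbx⟩ := hD.bijOn.surjOn hx
    exact mem_iUnion.2 ⟨⟨b, hbx⟩,
      hD.subset (hU ⟨b, hbx⟩) hcont hopen hV' subset_rfl ⟨b, hb, he ⟨b, hbx⟩⟩ hzD⟩
  have : DiscreteTopology (f ⁻¹' {x}) :=
    (IsDiscrete.of_openPartialHomeomorph f subset_rfl fun e _ =>
      (hf e).imp fun _ hφ => ⟨hφ.1, hφ.2.symm⟩).1
  cases isEmpty_or_nonempty (f ⁻¹' {x}) with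
  | inl hempty =>
    refine .of_preimage_eq_empty _ (hV.mem_nhds hx) (subset_empty_iff.1 ?_)
    rwa [iUnion_of_empty] at hcover
  | inr hne =>
    have : Nonempty A := hne.map Subtype.val
    exact .of_trivialization (t := hV.trivializationDiscrete U V
      (fun e _ hW => ((hU e).isOpen_preimage_inter_iff hcont hopen hW).symm)
      (fun e => (hU e).bijOn.injOn) (fun e => (hU e).bijOn.surjOn) hdisj hcover) hx

end TopologicalBase

section LocallyConvexBase

variable {A E : Type*} [TopologicalSpace A] [T2Space A] [AddCommGroup E] [Module ℝ E]
  [TopologicalSpace E] [IsTopologicalAddGroup E] [ContinuousSMul ℝ E] [LocallyConvexSpace ℝ E]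
  {f : A → E} {D : Set A} {V : Set E} {a x : A}

theorem IsSheet.nhdsWithin_eq (hD : IsSheet f D V) (hf : IsLocalHomeomorph f) (hV : Convex ℝ V)
    (hx : x ∈ closure D) : 𝓝[D] x = 𝓝[f ⁻¹' V] x := by
  refine (nhdsWithin_mono x hD.bijOn.mapsTo).antisymm (nhdsWithin_le_iff.2 ?_)
  have hcont := hf.continuous
  have hopen := hf.isOpenMap
  obtain ⟨U, hxU, hU⟩ := exists_isSheet_image hf x
  have hUx : f '' U ∈ 𝓝 (f x) := (hopen U hU.isOpen).mem_nhds (mem_image_of_mem f hxU)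
  obtain ⟨C, ⟨hCx, hC⟩, hCU⟩ := (LocallyConvexSpace.convex_basis (𝕜 := ℝ) (f x)).mem_iff.1 hUx
  have hO : IsOpen (U ∩ f ⁻¹' interior C) := hU.isOpen.inter (isOpen_interior.preimage hcont)
  have hxO : x ∈ U ∩ f ⁻¹' interior C := ⟨hxU, mem_interior_iff_mem_nhds.2 hCx⟩
  have hsheet : IsSheet f (U ∩ f ⁻¹' (interior C ∩ V)) (interior C ∩ V) :=
    hU.inter_preimage hcont (isOpen_interior.inter (hD.isOpen_base hopen))
      (inter_subset_left.trans (interior_subset.trans hCU))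
  obtain ⟨z, ⟨hzU, hzC⟩, hzD⟩ := mem_closure_iff.1 hx _ hO hxO
  have hsub : U ∩ f ⁻¹' (interior C ∩ V) ⊆ D :=
    hsheet.subset hD hcont hopen (hC.interior.inter hV).isPreconnected inter_subset_right
      ⟨z, ⟨hzU, hzC, hD.bijOn.mapsTo hzD⟩, hzD⟩
  exact mem_nhdsWithin.2 ⟨_, hO, hxO, fun y hy => hsub ⟨hy.1.1, hy.1.2, hy.2⟩⟩

theorem IsSheet.nhdsWithin_closure_eq (hD : IsSheet f D V) (hf : IsLocalHomeomorph f)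
    (hV : Convex ℝ V) (hx : x ∈ closure D) : 𝓝[closure D] x = 𝓝[f ⁻¹' closure V] x := by
  have hmapsTo : closure D ⊆ f ⁻¹' closure V := hD.bijOn.mapsTo.closure hf.continuous
  refine (nhdsWithin_mono x hmapsTo).antisymm (nhdsWithin_le_iff.2 ?_)
  rw [hf.isOpenMap.preimage_closure_eq_closure_preimage hf.continuous]
  exact closure_mem_nhdsWithin_closure (hD.nhdsWithin_eq hf hV hx ▸ self_mem_nhdsWithin)

theorem IsSheet.injOn_closure (hD : IsSheet f D V) (hf : IsLocalHomeomorph f)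
    (hV : Convex ℝ V) : InjOn f (closure D) := by
  have hmap : ∀ x ∈ closure D, map f (𝓝[D] x) = 𝓝[V] (f x) := fun x hx => by
    rw [hD.nhdsWithin_eq hf hV hx, map_nhdsWithin_preimage_of_isLocalHomeomorph hf]
  intro x hx y hy hxy
  have hnhds : 𝓝[D] x = 𝓝[D] y :=
    (map_eq_map_iff_of_injOn self_mem_nhdsWithin self_mem_nhdsWithin hD.bijOn.injOn).1 <| by
      rw [hmap x hx, hmap y hy, hxy]
  have : (𝓝[D] x).NeBot := mem_closure_iff_nhdsWithin_neBot.1 hx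
  exact eq_of_nhds_neBot
    (this.mono (le_inf nhdsWithin_le_nhds (hnhds.le.trans nhdsWithin_le_nhds)))

theorem IsSheet.connectedComponentIn_subset_closure (hD : IsSheet f D V)
    (hf : IsLocalHomeomorph f) (hV : Convex ℝ V) (ha : a ∈ D) :
    connectedComponentIn (f ⁻¹' closure V) a ⊆ closure D := by
  have haV : a ∈ f ⁻¹' closure V := subset_closure (hD.bijOn.mapsTo ha)
  refine subset_of_isPreconnected_of_forall_mem_nhdsWithin
    isPreconnected_connectedComponentIn isClosed_closure (fun x hx => ?_)
    ⟨a, mem_connectedComponentIn haV, subset_closure ha⟩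
  refine nhdsWithin_mono x (connectedComponentIn_subset _ _) ?_
  exact hD.nhdsWithin_closure_eq hf hV hx.2 ▸ self_mem_nhdsWithin

theorem IsSheet.isCompact_closure (hD : IsSheet f D V) (hf : IsLocalHomeomorph f)
    (hV : Convex ℝ V) (himage : f '' closure D = closure V) (hcpt : IsCompact (closure V)) :
    IsCompact (closure D) := by
  refine isCompact_of_isCompact_image (hD.injOn_closure hf hV) (fun x hx => ?_) (himage ▸ hcpt)
  rw [himage, hD.nhdsWithin_closure_eq hf hV hx,
    map_nhdsWithin_preimage_of_isLocalHomeomorph hf]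

theorem IsSheet.exists_superset_closure [T2Space E] (hD : IsSheet f D V)
    (hf : IsLocalHomeomorph f) (hV : Convex ℝ V) (hcpt : IsCompact (closure V)) (ha : a ∈ D)
    (h : closure V ⊆ f '' connectedComponentIn (f ⁻¹' closure V) a) :
    ∃ D', D ⊆ D' ∧ closure V ⊆ f '' D' ∧ IsSheet f D' (f '' D') := by
  have hsurj : closure V ⊆ f '' closure D :=
    h.trans (image_mono (hD.connectedComponentIn_subset_closure hf hV ha))
  have himage : f '' closure D = closure V :=
    (hD.bijOn.mapsTo.closure hf.continuous).image_subset.antisymm hsurj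
  obtain ⟨D', hDD', hD'⟩ := exists_isSheet_image_superset hf (hD.injOn_closure hf hV)
    (hD.isCompact_closure hf hV himage hcpt)
  exact ⟨D', subset_closure.trans hDD', hsurj.trans (image_mono hDD'), hD'⟩

end LocallyConvexBase

section NormedBase

variable {A E : Type*} [TopologicalSpace A] [T2Space A] [NormedAddCommGroup E] [NormedSpace ℝ E]
  {f : A → E} {D : Set A} {a : A}

theorem IsSheet.exists_ball_gt [ProperSpace E] (hf : IsLocalHomeomorph f) {c : E} {r : ℝ}
    (hr : 0 < r) (hD : IsSheet f D (ball c r)) (ha : a ∈ D)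
    (h : closedBall c r ⊆ f '' connectedComponentIn (f ⁻¹' closedBall c r) a) :
    ∃ s > r, ∃ D', a ∈ D' ∧ IsSheet f D' (ball c s) := by
  have hclosure : closure (ball c r) = closedBall c r := closure_ball c hr.ne'
  rw [← hclosure] at h
  obtain ⟨D', hDD', hcover, hD'⟩ := hD.exists_superset_closure hf (convex_ball c r)
    (hclosure ▸ isCompact_closedBall c r) ha h
  rw [hclosure] at hcover
  obtain ⟨δ, hδ, hthick⟩ := (isCompact_closedBall c r).exists_thickening_subset_open
    (hf.isOpenMap D' hD'.isOpen) hcover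
  rw [thickening_closedBall hδ hr.le] at hthick
  have hrs : r < δ + r := lt_add_of_pos_left r hδ
  exact ⟨δ + r, hrs, D' ∩ f ⁻¹' ball c (δ + r),
    ⟨hDD' ha, ball_subset_ball hrs.le (hD.bijOn.mapsTo ha)⟩,
    hD'.inter_preimage hf.continuous isOpen_ball hthick⟩

theorem exists_isSheet_ball_sSup (hf : IsLocalHomeomorph f) {S : Set ℝ} (hne : S.Nonempty)
    (hbdd : BddAbove S) (h : ∀ r ∈ S, ∃ D, a ∈ D ∧ IsSheet f D (ball (f a) r)) :
    ∃ D, a ∈ D ∧ IsSheet f D (ball (f a) (sSup S)) := by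
  choose D ha hD using fun r : S => h r r.2
  have hmono : Monotone D := fun r s hrs =>
    (hD r).subset (hD s) hf.continuous hf.isOpenMap (convex_ball _ _).isPreconnected
      (ball_subset_ball hrs) ⟨a, ha r, ha s⟩
  have hball : ⋃ r : S, ball (f a) r = ball (f a) (sSup S) := by
    ext y
    simp only [mem_iUnion, mem_ball, Subtype.exists, exists_prop, lt_csSup_iff hbdd hne]
  obtain ⟨r, hr⟩ := hne
  exact ⟨⋃ r, D r, mem_iUnion.2 ⟨⟨r, hr⟩, ha _⟩,
    hball ▸ isSheet_iUnion_of_directed hmono.directed_le hD⟩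

theorem not_bddAbove_setOf_isSheet_ball [ProperSpace E] (hf : IsLocalHomeomorph f)
    (h : ∀ r > 0, closedBall (f a) r ⊆
      f '' connectedComponentIn (f ⁻¹' closedBall (f a) r) a) :
    ¬ BddAbove {r | 0 < r ∧ ∃ D, a ∈ D ∧ IsSheet f D (ball (f a) r)} := by
  set S := {r | 0 < r ∧ ∃ D, a ∈ D ∧ IsSheet f D (ball (f a) r)}
  intro hbdd
  obtain ⟨U, haU, hU⟩ := exists_isSheet_image hf a
  obtain ⟨ε, hε, hball⟩ :=
    isOpen_iff.1 (hf.isOpenMap U hU.isOpen) (f a) (mem_image_of_mem f haU)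
  have hεS : ε ∈ S := ⟨hε, U ∩ f ⁻¹' ball (f a) ε, ⟨haU, mem_ball_self hε⟩,
    hU.inter_preimage hf.continuous isOpen_ball hball⟩
  have hpos : 0 < sSup S := hε.trans_le (le_csSup hbdd hεS)
  obtain ⟨D, haD, hD⟩ := exists_isSheet_ball_sSup hf ⟨ε, hεS⟩ hbdd fun r hr => hr.2
  obtain ⟨s, hs, hsheet⟩ := hD.exists_ball_gt hf hpos haD (h _ hpos)
  exact hs.not_ge (le_csSup hbdd ⟨hpos.trans hs, hsheet⟩)

theorem exists_isSheet_ball [ProperSpace E] (hf : IsLocalHomeomorph f)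
    (h : ∀ r > 0, closedBall (f a) r ⊆
      f '' connectedComponentIn (f ⁻¹' closedBall (f a) r) a)
    {c : E} {r : ℝ} (ha : f a ∈ ball c r) : ∃ D, a ∈ D ∧ IsSheet f D (ball c r) := by
  obtain ⟨s, ⟨-, D, haD, hD⟩, hs⟩ := not_bddAbove_iff.1 (not_bddAbove_setOf_isSheet_ball hf h)
    (r + dist c (f a))
  exact ⟨D ∩ f ⁻¹' ball c r, ⟨haD, ha⟩,
    hD.inter_preimage hf.continuous isOpen_ball (ball_subset_ball' hs.le)⟩

theorem stmt12_general [ProperSpace E] (hf : IsLocalHomeomorph f)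
    (h : ∀ a, ∀ r > 0, closedBall (f a) r ⊆
      f '' connectedComponentIn (f ⁻¹' closedBall (f a) r) a) :
    IsCoveringMap f := fun x =>
  isEvenlyCovered_of_forall_exists_isSheet hf isOpen_ball (convex_ball x 1).isPreconnected
    (fun a ha => exists_isSheet_ball hf (h a) ha) (mem_ball_self one_pos)

end NormedBase

end Sheets

/-- a local homeomorphism onto `ℝⁿ` such that every connected component of
the preimage of any closed ball surjects onto that ball is a covering map. -/
theorem stmt12 (n : ℕ) (hn : 1 ≤ n) (A : Type*) [TopologicalSpace A] [T2Space A]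
    (f : A → EuclideanSpace ℝ (Fin n)) (hf : IsLocalHomeomorph f)
    (h : ∀ (c : EuclideanSpace ℝ (Fin n)) (r : ℝ), 0 ≤ r →
      ∀ a ∈ f ⁻¹' Metric.closedBall c r,
        f '' connectedComponentIn (f ⁻¹' Metric.closedBall c r) a = Metric.closedBall c r) :
    IsCoveringMap f := by
  exact stmt12_general hf fun a r hr =>
    (h (f a) r hr.le a (Metric.mem_closedBall_self hr.le)).ge
end
end

section
/- Let n ≥ 1, let A be a nonempty connected Hausdorff topological space, and let π : A → ℝⁿ be a local homeomorphism such that for every closed ball B̄ ⊆ ℝⁿ and every connected component C of π⁻¹(B̄) one has π(C) = B̄. Then π is a homeomorphism from A onto ℝⁿ; in particular π admits a continuous global section γ : ℝⁿ → A with π ∘ γ = id. -/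
/-
Fix `a : A` and put `p = f a`. Continuous sections of `f` through `a` over convex sets are unique,
so those over balls centred at `p` glue. A section over an open ball extends to the closed ball: the
closure of its image is relatively clopen in the preimage of the closed ball, hence contains the
connected component of `a`, which maps onto the closed ball. A section over a closed ball, which is
compact, extends to a larger open ball. Hence the radii of such balls have no finite supremum and
there is a global section, whose image is clopen in the connected space `A`.
-/

noncomputable section

open scoped BigOperators

section LocalSections

open Filter Function Metric Set Topology

variable {A X E : Type*} [TopologicalSpace A] [TopologicalSpace X]

/-- `g` is a continuous section over `S` of the map `f`. It is a total function, with unspecified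
values outside `S`, so that its domain can be enlarged without passing between subtypes. -/
structure IsSectionOn (f : A → X) (g : X → A) (S : Set X) : Prop where
  continuousOn : ContinuousOn g S
  rightInvOn : RightInvOn g f S

theorem IsSectionOn.mono {f : A → X} {g : X → A} {S T : Set X} (hg : IsSectionOn f g T)
    (hST : S ⊆ T) : IsSectionOn f g S :=
  ⟨hg.continuousOn.mono hST, fun _ hx => hg.rightInvOn (hST hx)⟩

theorem isSectionOn_singleton (f : A → X) (a : A) : IsSectionOn f (fun _ => a) {f a} :=
  ⟨continuousOn_const, fun _ hx => hx.symm⟩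

theorem IsSectionOn.eqOn_of_isPreconnected [T2Space A] {f : A → X} {g g' : X → A} {S : Set X}
    {x : X} (hg : IsSectionOn f g S) (hg' : IsSectionOn f g' S) (hf : IsLocalHomeomorph f)
    (hS : IsPreconnected S) (hx : x ∈ S) (hgx : g x = g' x) : EqOn g g' S :=
  (T2Space.isSeparatedMap f).eqOn_of_comp_eqOn hf.isLocallyInjective hS hg.continuousOn
    hg'.continuousOn (fun _ hz => (hg.rightInvOn hz).trans (hg'.rightInvOn hz).symm) hx hgx

theorem tendsto_nhdsWithin_of_eventually_apply_apply_eq {f : A → X} {g : X → A} {S : Set X}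
    {y : A} (hf : IsOpenMap f) (h : ∀ᶠ z in 𝓝 y, f z ∈ S → g (f z) = z) :
    Tendsto g (𝓝[S] (f y)) (𝓝 y) := by
  refine tendsto_def.2 fun W hW => ?_
  have himage : f '' {z | z ∈ W ∧ (f z ∈ S → g (f z) = z)} ∈ 𝓝 (f y) :=
    hf.image_mem_nhds (inter_mem hW h)
  filter_upwards [mem_nhdsWithin_of_mem_nhds himage, self_mem_nhdsWithin]
  rintro _ ⟨z, ⟨hzW, hz⟩, rfl⟩ hzS
  rwa [mem_preimage, hz hzS]

theorem exists_isSectionOn_iUnion {f : A → X} {ι : Type*} [Nonempty ι] {S : ι → Set X}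
    {g : ι → X → A} (hS : ∀ i, IsOpen (S i)) (hg : ∀ i, IsSectionOn f (g i) (S i))
    (hgg : ∀ i j, EqOn (g i) (g j) (S i ∩ S j)) :
    ∃ G, IsSectionOn f G (⋃ i, S i) ∧ ∀ i, EqOn G (g i) (S i) := by
  have hcover : ∀ x ∈ ⋃ i, S i, ∃ i, x ∈ S i := fun x => mem_iUnion.1
  choose! i hi using hcover
  have hG : ∀ j, EqOn (fun x => g (i x) x) (g j) (S j) := fun j x hx =>
    hgg _ _ ⟨hi x (mem_iUnion_of_mem j hx), hx⟩
  refine ⟨fun x => g (i x) x, ⟨?_, fun x hx => (hg _).rightInvOn (hi x hx)⟩, hG⟩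
  exact ContinuousOn.iUnion_of_isOpen (fun j => (hg j).continuousOn.congr (hG j)) hS

theorem IsSectionOn.exists_extend_isOpen_superset [Nonempty A] [T2Space X] {f : A → X} {g : X → A}
    {K : Set X} (hg : IsSectionOn f g K) (hf : IsLocalHomeomorph f) (hK : IsCompact K) :
    ∃ U, IsOpen U ∧ K ⊆ U ∧ ∃ G, IsSectionOn f G U ∧ EqOn G g K := by
  have hinj : InjOn f (g '' K) := (LeftInvOn.rightInvOn_image hg.rightInvOn).injOn
  obtain ⟨W, hW, hKW, hfW⟩ := hinj.exists_isOpen_superset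
    (hK.image_of_continuousOn hg.continuousOn) (fun _ _ => hf.continuous.continuousAt)
    fun y _ => isLocallyInjective_iff_nhds.1 hf.isLocallyInjective y
  have hleft : LeftInvOn (invFunOn f W) f W := hfW.leftInvOn_invFunOn
  have hgW : ∀ x ∈ K, g x ∈ W := fun x hx => hKW (mem_image_of_mem g hx)
  refine ⟨f '' W, hf.isOpenMap W hW, fun x hx => ⟨g x, hgW x hx, hg.rightInvOn hx⟩,
    invFunOn f W, ⟨?_, fun x hx => invFunOn_eq hx⟩, fun x hx => ?_⟩
  · rintro _ ⟨y, hy, rfl⟩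
    rw [ContinuousWithinAt, hleft hy]
    refine tendsto_nhdsWithin_of_eventually_apply_apply_eq hf.isOpenMap ?_
    filter_upwards [hW.mem_nhds hy] with z hz _ using hleft hz
  · rw [← hleft (hgW x hx), hg.rightInvOn hx]

theorem isHomeomorph_of_rightInverse [T2Space A] [PreconnectedSpace A]
    [Nonempty X] {f : A → X} {γ : X → A} (hf : IsLocalHomeomorph f) (hγ : Continuous γ)
    (hfγ : RightInverse γ f) : IsHomeomorph f := by
  have hopen : IsOpen (range γ) := (hf.isOpenEmbedding_of_comp
    (by rw [hfγ.comp_eq_id]; exact .id) hγ).isOpen_range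
  have hclosed : IsClosed (range γ) := hfγ.isClosed_range hf.continuous hγ
  have hγ_surj : Surjective γ :=
    range_eq_univ.1 (IsClopen.eq_univ ⟨hclosed, hopen⟩ (range_nonempty γ))
  exact ⟨hf.continuous, hf.isOpenMap, (hfγ.leftInverse_of_surjective hγ_surj).injective,
    hfγ.surjective⟩

section LocallyConvex

variable [AddCommGroup E] [Module ℝ E] [TopologicalSpace E] [IsTopologicalAddGroup E]
  [ContinuousSMul ℝ E] [T2Space A] {f : A → E} {g : E → A} {S : Set E} {a y : A}

theorem exists_isSectionOn_iUnion_of_convex {ι : Type*} [Nonempty ι] {S : ι → Set E}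
    (hf : IsLocalHomeomorph f) (hSo : ∀ i, IsOpen (S i)) (hSc : ∀ i, Convex ℝ (S i))
    (ha : ∀ i, f a ∈ S i) (h : ∀ i, ∃ g, IsSectionOn f g (S i) ∧ g (f a) = a) :
    ∃ g, IsSectionOn f g (⋃ i, S i) ∧ g (f a) = a := by
  choose g hg hga using h
  have hgg : ∀ i j, EqOn (g i) (g j) (S i ∩ S j) := fun i j =>
    ((hg i).mono inter_subset_left).eqOn_of_isPreconnected ((hg j).mono inter_subset_right) hf
      ((hSc i).inter (hSc j)).isPreconnected ⟨ha i, ha j⟩ ((hga i).trans (hga j).symm)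
  obtain ⟨G, hG, hGg⟩ := exists_isSectionOn_iUnion hSo hg hgg
  let i := Classical.arbitrary ι
  exact ⟨G, hG, (hGg i (ha i)).trans (hga i)⟩

variable [LocallyConvexSpace ℝ E]

namespace IsSectionOn

theorem eventually_apply_eq_of_mem_closure (hg : IsSectionOn f g S) (hf : IsLocalHomeomorph f)
    (hS : Convex ℝ S) (hy : y ∈ closure (g '' S)) : ∀ᶠ z in 𝓝 y, f z ∈ S → g (f z) = z := by
  obtain ⟨e, hye, rfl⟩ := hf y
  obtain ⟨B, ⟨hB, hBc⟩, hBe⟩ := (LocallyConvexSpace.convex_basis (𝕜 := ℝ) (e y)).mem_iff.1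
    (e.open_target.mem_nhds (e.map_source hye))
  have hN : e.source ∩ e ⁻¹' B ∈ 𝓝 y :=
    inter_mem (e.open_source.mem_nhds hye) (e.continuousAt hye hB)
  obtain ⟨_, ⟨hxe, hxB⟩, x, hx, rfl⟩ := mem_closure_iff_nhds.1 hy _ hN
  rw [mem_preimage, hg.rightInvOn hx] at hxB
  have hsymm : IsSectionOn e e.symm (B ∩ S) :=
    ⟨e.continuousOn_symm.mono (inter_subset_left.trans hBe), fun _ hz => e.right_inv (hBe hz.1)⟩
  have heq : EqOn g e.symm (B ∩ S) :=
    (hg.mono inter_subset_right).eqOn_of_isPreconnected hsymm hf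
      (hBc.inter hS).isPreconnected ⟨hxB, hx⟩
      (by rw [e.eq_symm_apply hxe (hBe hxB), hg.rightInvOn hx])
  filter_upwards [hN] with z hz hzS
  rw [heq ⟨hz.2, hzS⟩, e.left_inv hz.1]

theorem eventually_mem_closure_image (hg : IsSectionOn f g S) (hf : IsLocalHomeomorph f)
    (hS : Convex ℝ S) (hy : y ∈ closure (g '' S)) :
    ∀ᶠ z in 𝓝 y, f z ∈ closure S → z ∈ closure (g '' S) := by
  filter_upwards [(hg.eventually_apply_eq_of_mem_closure hf hS hy).eventually_nhds] with z hz hzS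
  have hfreq : ∃ᶠ w in 𝓝 z, f w ∈ S := mem_closure_iff_frequently.1
    (hf.isOpenMap.preimage_closure_subset_closure_preimage hzS)
  exact mem_closure_iff_frequently.2 <|
    (hfreq.and_eventually hz).mono fun w hw => ⟨f w, hw.1, hw.2 hw.1⟩

theorem subset_closure_image_of_isPreconnected {C : Set A} (hg : IsSectionOn f g S)
    (hf : IsLocalHomeomorph f) (hS : Convex ℝ S) (hC : IsPreconnected C)
    (hCS : C ⊆ f ⁻¹' closure S) (hCg : (C ∩ closure (g '' S)).Nonempty) :
    C ⊆ closure (g '' S) := by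
  let V : Set A := {y | ∀ᶠ z in 𝓝 y, f z ∈ closure S → z ∈ closure (g '' S)}
  have hV : closure (g '' S) ⊆ V := fun y hy => hg.eventually_mem_closure_image hf hS hy
  by_contra hnot
  obtain ⟨z, hzC, hz⟩ := not_subset.1 hnot
  obtain ⟨w, hwC, hwV, hw⟩ := hC V (closure (g '' S))ᶜ isOpen_setOfPred_eventually_nhds
    isClosed_closure.isOpen_compl
    (fun w _ => (em (w ∈ closure (g '' S))).imp_left fun hw => hV hw)
    (hCg.mono (inter_subset_inter_right C hV)) ⟨z, hzC, hz⟩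
  exact hw (hwV.self_of_nhds (hCS hwC))

theorem exists_extend_closure_of_surjOn (hg : IsSectionOn f g S) (hf : IsLocalHomeomorph f)
    (hS : Convex ℝ S) (hsurj : SurjOn f (closure (g '' S)) (closure S)) :
    ∃ G, IsSectionOn f G (closure S) ∧ EqOn G g S := by
  have hG : ∀ y ∈ closure (g '' S), f y ∈ closure S → extendFrom S g (f y) = y :=
    fun y hy hfy => extendFrom_eq hfy <|
      tendsto_nhdsWithin_of_eventually_apply_apply_eq hf.isOpenMap
        (hg.eventually_apply_eq_of_mem_closure hf hS hy)
  refine ⟨extendFrom S g, ⟨?_, ?_⟩, extendFrom_extends hg.continuousOn⟩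
  · intro x hx
    obtain ⟨y, hy, rfl⟩ := hsurj hx
    rw [ContinuousWithinAt, hG y hy hx]
    refine tendsto_nhdsWithin_of_eventually_apply_apply_eq hf.isOpenMap ?_
    filter_upwards [hg.eventually_mem_closure_image hf hS hy] with z hz hzS
    exact hG z (hz hzS) hzS
  · intro x hx
    obtain ⟨y, hy, rfl⟩ := hsurj hx
    rw [hG y hy hx]

theorem exists_extend_closure_of_surjOn_connectedComponentIn (hg : IsSectionOn f g S)
    (hf : IsLocalHomeomorph f) (hS : Convex ℝ S) (ha : f a ∈ S) (hga : g (f a) = a)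
    (hsurj : SurjOn f (connectedComponentIn (f ⁻¹' closure S) a) (closure S)) :
    ∃ G, IsSectionOn f G (closure S) ∧ G (f a) = a := by
  have hcomp : connectedComponentIn (f ⁻¹' closure S) a ⊆ closure (g '' S) :=
    hg.subset_closure_image_of_isPreconnected hf hS isPreconnected_connectedComponentIn
      (connectedComponentIn_subset _ _)
      ⟨a, mem_connectedComponentIn (subset_closure ha), subset_closure ⟨f a, ha, hga⟩⟩
  obtain ⟨G, hG, hGg⟩ := hg.exists_extend_closure_of_surjOn hf hS (hsurj.mono hcomp subset_rfl)
  exact ⟨G, hG, (hGg ha).trans hga⟩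

end IsSectionOn

end LocallyConvex

section Normed

variable [NormedAddCommGroup E] [NormedSpace ℝ E] [ProperSpace E] {f : A → E} {a : A}

theorem IsSectionOn.exists_extend_ball_of_closedBall {g : E → A} {t : ℝ}
    (hg : IsSectionOn f g (closedBall (f a) t)) (hf : IsLocalHomeomorph f) (ht : 0 ≤ t)
    (hga : g (f a) = a) : ∃ s > t, ∃ G, IsSectionOn f G (ball (f a) s) ∧ G (f a) = a := by
  have : Nonempty A := ⟨a⟩
  obtain ⟨U, hU, htU, G, hG, hGg⟩ :=
    hg.exists_extend_isOpen_superset hf (isCompact_closedBall (f a) t)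
  obtain ⟨δ, hδ, hδU⟩ := (isCompact_closedBall (f a) t).exists_thickening_subset_open hU htU
  rw [thickening_closedBall hδ ht] at hδU
  exact ⟨δ + t, lt_add_of_pos_left t hδ, G, hG.mono hδU, (hGg (mem_closedBall_self ht)).trans hga⟩

theorem exists_isSectionOn_univ [T2Space A] (hf : IsLocalHomeomorph f) (a : A)
    (h : ∀ t : ℝ, 0 < t → SurjOn f (connectedComponentIn (f ⁻¹' closedBall (f a) t) a)
      (closedBall (f a) t)) : ∃ g, IsSectionOn f g univ := by
  let R : Set ℝ := {r | 0 < r ∧ ∃ g, IsSectionOn f g (ball (f a) r) ∧ g (f a) = a}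
  obtain ⟨r₀, hr₀⟩ : R.Nonempty := IsSectionOn.exists_extend_ball_of_closedBall
    (by simpa only [closedBall_zero] using isSectionOn_singleton f a) hf le_rfl rfl
  have : Nonempty R := ⟨r₀, hr₀⟩
  obtain ⟨g, hg, hga⟩ := exists_isSectionOn_iUnion_of_convex (S := fun r : R => ball (f a) r) hf
    (fun _ => isOpen_ball) (fun _ => convex_ball _ _) (fun r => mem_ball_self r.2.1) fun r => r.2.2
  suffices hR : ¬BddAbove R by
    refine ⟨g, hg.mono fun x _ => ?_⟩
    obtain ⟨r, hr, hxr⟩ := not_bddAbove_iff.1 hR (dist x (f a))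
    exact mem_iUnion_of_mem ⟨r, hr⟩ hxr
  intro hR
  have hpos : 0 < sSup R := hr₀.1.trans_le (le_csSup hR hr₀)
  have hsup : IsSectionOn f g (ball (f a) (sSup R)) := hg.mono fun x hx => by
    obtain ⟨r, hr, hxr⟩ := exists_lt_of_lt_csSup ⟨r₀, hr₀⟩ (mem_ball.1 hx)
    exact mem_iUnion_of_mem ⟨r, hr⟩ hxr
  have hclosure : closure (ball (f a) (sSup R)) = closedBall (f a) (sSup R) :=
    closure_ball _ hpos.ne'
  obtain ⟨G, hG, hGa⟩ := hsup.exists_extend_closure_of_surjOn_connectedComponentIn hf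
    (convex_ball _ _) (mem_ball_self hpos) hga (by rw [hclosure]; exact h _ hpos)
  rw [hclosure] at hG
  obtain ⟨s, hs, hsection⟩ := hG.exists_extend_ball_of_closedBall hf hpos.le hGa
  exact (le_csSup hR ⟨hpos.trans hs, hsection⟩).not_gt hs

theorem stmt13_general [T2Space A] [PreconnectedSpace A] (hf : IsLocalHomeomorph f) (a : A)
    (h : ∀ t : ℝ, 0 < t → SurjOn f (connectedComponentIn (f ⁻¹' closedBall (f a) t) a)
      (closedBall (f a) t)) :
    IsHomeomorph f ∧ ∃ γ : E → A, Continuous γ ∧ f ∘ γ = id := by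
  obtain ⟨γ, hγ⟩ := exists_isSectionOn_univ hf a h
  have hγ_cont : Continuous γ := continuousOn_univ.1 hγ.continuousOn
  have hfγ : RightInverse γ f := fun x => hγ.rightInvOn (mem_univ x)
  exact ⟨isHomeomorph_of_rightInverse hf hγ_cont hfγ, γ, hγ_cont, hfγ.comp_eq_id⟩

end Normed

end LocalSections

/-- with `A` moreover nonempty and connected, such a map is a homeomorphism
onto `ℝⁿ`; in particular it admits a continuous global section. -/
theorem stmt13 (n : ℕ) (hn : 1 ≤ n) (A : Type*) [TopologicalSpace A] [T2Space A]
    [Nonempty A] [ConnectedSpace A]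
    (f : A → EuclideanSpace ℝ (Fin n)) (hf : IsLocalHomeomorph f)
    (h : ∀ (c : EuclideanSpace ℝ (Fin n)) (r : ℝ), 0 ≤ r →
      ∀ a ∈ f ⁻¹' Metric.closedBall c r,
        f '' connectedComponentIn (f ⁻¹' Metric.closedBall c r) a = Metric.closedBall c r) :
    IsHomeomorph f ∧
    ∃ γ : EuclideanSpace ℝ (Fin n) → A, Continuous γ ∧ f ∘ γ = id := by
  obtain ⟨a⟩ := ‹Nonempty A›
  exact stmt13_general hf a fun t ht => (h (f a) t ht.le a (Metric.mem_closedBall_self ht.le)).ge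
end
end

section
/- Let b ≥ 4 and let α ∈ ℝ^b be a nonzero vector. Then the hyperplane section D ∩ α^⊥ is nonempty: there exists [z] ∈ D with ⟨z, α⟩ = 0. -/
noncomputable section

open scoped BigOperators

/-!
A positive definite 3-space `W ⊆ ℝᵇ` has a three-dimensional complexification `W_ℂ`, on which
`⟨z, z̄⟩ > 0` for every nonzero `z`. So `ℙ(W_ℂ)` meets the period domain exactly in the conic
`q = 0`, and over `ℂ` a line in a projective plane always meets a conic.
-/

section QuadraticForm

open Module

variable {K V U : Type*} [Field K] [AddCommGroup V] [Module K V] [AddCommGroup U] [Module K U]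

theorem exists_quadratic_eq_zero_of_isAlgClosed [IsAlgClosed K] {a : K} (ha : a ≠ 0) (b c : K) :
    ∃ t : K, a * t ^ 2 + b * t + c = 0 := by
  have hdeg := Polynomial.degree_quadratic (b := b) (c := c) ha
  obtain ⟨t, ht⟩ := IsAlgClosed.exists_root _ (by rw [hdeg]; exact two_ne_zero)
  exact ⟨t, by simpa using ht⟩

theorem map_add_smul_eq_quadratic (Q : QuadraticForm K V) (x y : V) (t : K) :
    Q (x + t • y) = Q y * t ^ 2 + QuadraticMap.polar Q x y * t + Q x := by
  rw [QuadraticMap.map_add Q, Q.map_smul, Q.polar_smul_right, smul_eq_mul, smul_eq_mul]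
  ring

theorem not_anisotropic_of_one_lt_finrank [IsAlgClosed K] (Q : QuadraticForm K V)
    (hV : 1 < finrank K V) : ¬ Q.Anisotropic := by
  intro hQ
  have : Nontrivial V := nontrivial_of_finrank_pos (zero_lt_one.trans hV)
  obtain ⟨y, hy⟩ := exists_ne (0 : V)
  obtain ⟨x, hyx⟩ := exists_linearIndependent_pair_of_one_lt_finrank hV hy
  obtain ⟨t, ht⟩ := exists_quadratic_eq_zero_of_isAlgClosed (mt (hQ y) hy)
    (QuadraticMap.polar Q x y) (Q x)
  have hxy : x + t • y = 0 := hQ _ ((map_add_smul_eq_quadratic Q x y t).trans ht)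
  have hcoeff := LinearIndependent.pair_iff.1 hyx t 1 (by rw [one_smul, add_comm, hxy])
  exact one_ne_zero hcoeff.2

theorem one_lt_finrank_ker [FiniteDimensional K U] (f : V →ₗ[K] U)
    (h : finrank K U + 1 < finrank K V) : 1 < finrank K (LinearMap.ker f) := by
  have : FiniteDimensional K V := .of_finrank_pos (by omega)
  have hrank := f.finrank_range_add_finrank_ker
  have hrange := (LinearMap.range f).finrank_le
  omega

theorem exists_isotropic_mem_ker [IsAlgClosed K] [FiniteDimensional K U]
    (Q : QuadraticForm K V) (f : V →ₗ[K] U) (h : finrank K U + 1 < finrank K V) :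
    ∃ v ≠ 0, f v = 0 ∧ Q v = 0 := by
  obtain ⟨v, hv, hQv⟩ := (QuadraticMap.not_anisotropic_iff_exists _).1 <|
    not_anisotropic_of_one_lt_finrank (Q.comp (LinearMap.ker f).subtype) (one_lt_finrank_ker f h)
  exact ⟨v, by simpa using hv, v.2, hQv⟩

open scoped Matrix in
theorem exists_isotropic_dotProduct_eq_zero [IsAlgClosed K] {n : Type*} [Fintype n]
    (hn : 2 < Fintype.card n) (a : n → K) : ∃ v ≠ 0, v ⬝ᵥ v = 0 ∧ v ⬝ᵥ a = 0 := by
  obtain ⟨v, hv, hva, hvv⟩ := exists_isotropic_mem_ker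
    (LinearMap.BilinMap.toQuadraticMap (dotProductBilin K K))
    ((dotProductBilin K K).flip a) (by simpa using hn)
  exact ⟨v, hv, hvv, hva⟩

end QuadraticForm

section PeriodDomain

open Function
open scoped Matrix ComplexOrder

variable {b : ℕ}

theorem eps_castLE (hb : 3 ≤ b) (i : Fin 3) : eps (i.castLE hb) = 1 :=
  if_pos i.isLt

theorem bC_extend_castLE (hb : 3 ≤ b) (v : Fin 3 → ℂ) (w : Fin b → ℂ) :
    bC (extend (Fin.castLE hb) v 0) w = v ⬝ᵥ (w ∘ Fin.castLE hb) := by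
  have hinj := Fin.castLE_injective hb
  refine (Fintype.sum_of_injective _ hinj _ _ (fun i hi ↦ ?_) fun i ↦ ?_).symm
  · have hzero : extend (Fin.castLE hb) v 0 i = 0 := extend_apply' _ _ _ hi
    rw [hzero, mul_zero, zero_mul]
  · simp [hinj.extend_apply, eps_castLE]

theorem isPeriodVec.ne_zero {z : Fin b → ℂ} (hz : isPeriodVec z) : z ≠ 0 := by
  rintro rfl
  simpa [bC] using hz.2

theorem isPeriodVec_extend_castLE (hb : 3 ≤ b) {v : Fin 3 → ℂ} (hv : v ≠ 0) (hvv : v ⬝ᵥ v = 0) :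
    isPeriodVec (extend (Fin.castLE hb) v 0) := by
  have hrestrict : extend (Fin.castLE hb) v 0 ∘ Fin.castLE hb = v :=
    extend_comp (Fin.castLE_injective hb) v 0
  have hconj : conjVec (extend (Fin.castLE hb) v 0) ∘ Fin.castLE hb = star v :=
    congrArg star hrestrict
  constructor
  · rw [qC, bC_extend_castLE, hrestrict, hvv]
  · rw [bC_extend_castLE, hconj]
    exact (Complex.pos_iff.1 (Matrix.dotProduct_self_star_pos_iff.2 hv)).1

end PeriodDomain

theorem stmt15_general (b : ℕ) (hb : 3 ≤ b) (α : Fin b → ℂ) :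
    ∃ z : Fin b → ℂ, z ≠ 0 ∧ isPeriodVec z ∧ bC z α = 0 := by
  obtain ⟨v, hv, hvv, hvα⟩ := exists_isotropic_dotProduct_eq_zero
    (by simp) (α ∘ Fin.castLE hb)
  have hz := isPeriodVec_extend_castLE hb hv hvv
  exact ⟨_, hz.ne_zero, hz, (bC_extend_castLE hb v α).trans hvα⟩

/-- for `b ≥ 4` each hyperplane section `D ∩ α^⊥` is nonempty. -/
theorem stmt15 (b : ℕ) (hb : 4 ≤ b) (α : Fin b → ℝ) (hα : α ≠ 0) :
    ∃ z : Fin b → ℂ, z ≠ 0 ∧ isPeriodVec z ∧ bC z (cplx α) = 0 :=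
  stmt15_general b (by omega) (cplx α)
end
end
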